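/- Let α and β be real numbers with 0 < α < 1 and 0 < β < 1, and let x be a complex number with Re(x) > 0. Define, for m ≥ 1, κ_{2m} = (2m−α−β)(2m−1+α)(2m−1+β)/(4(2m−1)) and κ_{2m−1} = (2m−2+α+β)(2m−1−α)(2m−1−β)/(4(2m−1)). Then the continued fraction x/2 + K_{m=1}^∞(κ_m/x) (all partial denominators after the initial term equal to x) converges to a nonzero value v, and Γ((x−α+1)/2)·Γ((x+α+β)/2)·Γ((x−β+1)/2) / [Γ((x+α+1)/2)·Γ((x−α−β+2)/2)·Γ((x+β+1)/2)] = 1/v. -/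

import Mathlib

open Filter

noncomputable def cfA (a b : ℕ → ℂ) : ℕ → ℂ
  | 0 => 1
  | 1 => b 0
  | n + 2 => b (n + 1) * cfA a b (n + 1) + a (n + 1) * cfA a b n

noncomputable def cfB (a b : ℕ → ℂ) : ℕ → ℂ
  | 0 => 0
  | 1 => 1
  | n + 2 => b (n + 1) * cfB a b (n + 1) + a (n + 1) * cfB a b n

/-- The continued fraction `b 0 + K_{n=1}^∞ (a n / b n)` converges to `v`. -/
def CFConvergesTo (a b : ℕ → ℂ) (v : ℂ) : Prop :=
  (∀ᶠ n in atTop, cfB a b n ≠ 0) ∧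
    Tendsto (fun n => cfA a b n / cfB a b n) atTop (nhds v)

/-- `κ_{2m} = (2m−α−β)(2m−1+α)(2m−1+β)/(4(2m−1))`,
`κ_{2m−1} = (2m−2+α+β)(2m−1−α)(2m−1−β)/(4(2m−1))`. -/
noncomputable def aSeq (α β : ℝ) : ℕ → ℂ := fun n =>
  if n % 2 = 0 then
    ((n : ℂ) - α - β) * ((n : ℂ) - 1 + α) * ((n : ℂ) - 1 + β) / (4 * ((n : ℂ) - 1))
  else
    ((n : ℂ) - 1 + α + β) * ((n : ℂ) - α) * ((n : ℂ) - β) / (4 * (n : ℂ))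

/-- `b_0 = x/2`, and all later partial denominators equal `x`. -/
noncomputable def bSeq (x : ℂ) : ℕ → ℂ := fun n => if n = 0 then x / 2 else x

/-!
For `a_j > 0` and `Re b_j > 0` the maps `w ↦ a_j / (b_j + w)` preserve the right half-plane, so its
images under the modified approximants `S_n` are nested value sets. Their radii are controlled by
`|a_1| ⋯ |a_n| / Re (B_n * conj B_{n-1})`, which tends to `0` as soon as the series
`∑ √(Re b_n * Re b_{n+1} / a_{n+1})` diverges. Hence the continued fraction converges, and so does
every sequence with `n`-th term in the `n`-th value set, to the same limit.

The recurrences at `x` and at `x + 2` are intertwined by a contiguous relation, which presents a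
fixed multiple of the `n`-th approximant at `x + 2` as a point of the `n`-th value set at `x`. In
the limit the value `v` satisfies `v(x) = λ(x) / μ(x) * v(x + 2)`, while the quotient `G` of Gamma
values satisfies `G(x + 2) = λ(x) / μ(x) * G(x)`. So `G * v` is `2`-periodic, and it equals `1`
because `G(x + 2n) ~ 1 / n` and `v(x + 2n) ~ n`.
-/

open Finset
open scoped ComplexOrder ComplexConjugate

section ContinuedFraction

theorem norm_mul_re_mul_conj_le {w : ℂ} (hw : 0 ≤ w.re) (z y : ℂ) :
    ‖w‖ * (z * conj y).re ≤ ‖z‖ * ‖z + w * y‖ := by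
  rcases eq_or_ne w 0 with rfl | hw0
  · simpa using mul_self_nonneg ‖z‖
  refine le_of_mul_le_mul_left ?_ (norm_pos_iff.mpr hw0)
  calc ‖w‖ * (‖w‖ * (z * conj y).re) = ‖w‖ ^ 2 * (z * conj y).re := by ring
    _ ≤ w.re * ‖z‖ ^ 2 + ‖w‖ ^ 2 * (z * conj y).re := le_add_of_nonneg_left (by positivity)
    _ = ((z + w * y) * (conj w * conj z)).re := by
      simp only [Complex.sq_norm, Complex.normSq_apply, Complex.mul_re, Complex.mul_im,
        Complex.add_re, Complex.add_im, Complex.conj_re, Complex.conj_im]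
      ring
    _ ≤ ‖(z + w * y) * (conj w * conj z)‖ := Complex.re_le_norm _
    _ = ‖w‖ * (‖z‖ * ‖z + w * y‖) := by
      simp only [norm_mul, Complex.norm_conj]
      ring

theorem add_mul_ne_zero_of_re_mul_conj_pos {w z y : ℂ} (hw : 0 ≤ w.re)
    (h : 0 < (z * conj y).re) : z + w * y ≠ 0 := by
  intro h0
  rw [eq_neg_of_add_eq_zero_left h0, neg_mul, mul_assoc, Complex.mul_conj, Complex.neg_re,
    Complex.re_mul_ofReal] at h
  linarith [mul_nonneg hw (Complex.normSq_nonneg y)]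

theorem re_div_pos_of_pos {a z : ℂ} (ha : 0 < a) (hz : 0 < z.re) : 0 < (a / z).re := by
  have hnorm : 0 < Complex.normSq z := Complex.normSq_pos.mpr (Complex.ne_zero_of_re_pos hz)
  rw [Complex.eq_coe_norm_of_nonneg ha.le, div_eq_mul_inv, Complex.re_ofReal_mul, Complex.inv_re]
  have := norm_pos_iff.mpr ha.ne'
  positivity

variable {a b : ℕ → ℂ}

theorem cfA_add_two (a b : ℕ → ℂ) (n : ℕ) :
    cfA a b (n + 2) = b (n + 1) * cfA a b (n + 1) + a (n + 1) * cfA a b n := rfl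

theorem cfB_add_two (a b : ℕ → ℂ) (n : ℕ) :
    cfB a b (n + 2) = b (n + 1) * cfB a b (n + 1) + a (n + 1) * cfB a b n := rfl

theorem cfA_mul_cfB_succ_sub (a b : ℕ → ℂ) (n : ℕ) :
    cfA a b n * cfB a b (n + 1) - cfA a b (n + 1) * cfB a b n = ∏ j ∈ range n, -a (j + 1) := by
  induction n with
  | zero => simp [cfA, cfB]
  | succ n ih =>
    rw [prod_range_succ, ← ih, cfA_add_two, cfB_add_two]
    ring

/-- The quantity `Re (B_n * conj B_{n-1}) / (|a_1| ⋯ |a_n|)` in canonical indexing, where `B_n` is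
`cfB a b (n + 1)`. For `a_j > 0` and `Re b_j > 0` it is nondecreasing, and its inverse bounds the
radius of the `n`-th value set around the `n`-th approximant. -/
noncomputable def cfEnergy (a b : ℕ → ℂ) (n : ℕ) : ℝ :=
  (cfB a b (n + 1) * conj (cfB a b n)).re / ∏ j ∈ range n, ‖a (j + 1)‖

theorem prod_norm_pos (ha : ∀ n, 0 < a (n + 1)) (n : ℕ) : 0 < ∏ j ∈ range n, ‖a (j + 1)‖ :=
  prod_pos fun j _ => norm_pos_iff.mpr (ha j).ne'

theorem cfEnergy_zero (a b : ℕ → ℂ) : cfEnergy a b 0 = 0 := by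
  simp [cfEnergy, cfB]

theorem cfEnergy_succ (ha : ∀ n, 0 < a (n + 1)) (n : ℕ) :
    cfEnergy a b (n + 1) = cfEnergy a b n +
      (b (n + 1)).re * ‖cfB a b (n + 1)‖ ^ 2 / ∏ j ∈ range (n + 1), ‖a (j + 1)‖ := by
  have hre : (cfB a b (n + 2) * conj (cfB a b (n + 1))).re =
      (b (n + 1)).re * ‖cfB a b (n + 1)‖ ^ 2 +
        ‖a (n + 1)‖ * (cfB a b (n + 1) * conj (cfB a b n)).re := by
    rw [cfB_add_two, Complex.eq_coe_norm_of_nonneg (ha n).le, Complex.sq_norm,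
      Complex.normSq_apply, Complex.norm_real, norm_norm]
    simp only [Complex.mul_re, Complex.mul_im, Complex.add_re, Complex.add_im, Complex.conj_re,
      Complex.conj_im, Complex.ofReal_re, Complex.ofReal_im]
    ring
  have hprod := (prod_norm_pos ha n).ne'
  have hnorm := norm_ne_zero_iff.mpr (ha n).ne'
  rw [cfEnergy, cfEnergy, hre, prod_range_succ]
  field_simp
  ring

theorem cfEnergy_le (ha : ∀ n, 0 < a (n + 1)) (n : ℕ) :
    cfEnergy a b n ≤ ‖cfB a b (n + 1)‖ * ‖cfB a b n‖ / ∏ j ∈ range n, ‖a (j + 1)‖ := by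
  have := prod_norm_pos ha n
  rw [cfEnergy]
  gcongr
  simpa using Complex.re_le_norm (cfB a b (n + 1) * conj (cfB a b n))

theorem monotone_cfEnergy (ha : ∀ n, 0 < a (n + 1)) (hb : ∀ n, 0 < (b (n + 1)).re) :
    Monotone (cfEnergy a b) := by
  refine monotone_nat_of_le_succ fun n => ?_
  have := prod_norm_pos ha (n + 1)
  have := hb n
  rw [cfEnergy_succ ha]
  exact le_add_of_nonneg_right (by positivity)

theorem cfEnergy_succ_pos (ha : ∀ n, 0 < a (n + 1)) (hb : ∀ n, 0 < (b (n + 1)).re) (n : ℕ) :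
    0 < cfEnergy a b (n + 1) := by
  have h1 : 0 < cfEnergy a b 1 := by
    have := prod_norm_pos ha 1
    have := hb 0
    rw [cfEnergy_succ ha, cfEnergy_zero, zero_add, zero_add, cfB, norm_one]
    positivity
  exact h1.trans_le (monotone_cfEnergy ha hb (by omega))

theorem re_cfB_mul_conj_pos (ha : ∀ n, 0 < a (n + 1)) (hb : ∀ n, 0 < (b (n + 1)).re) (n : ℕ) :
    0 < (cfB a b (n + 2) * conj (cfB a b (n + 1))).re :=
  (div_pos_iff_of_pos_right (prod_norm_pos ha (n + 1))).mp (cfEnergy_succ_pos ha hb n)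

theorem cfB_succ_add_mul_ne_zero (ha : ∀ n, 0 < a (n + 1)) (hb : ∀ n, 0 < (b (n + 1)).re) (n : ℕ)
    {w : ℂ} (hw : 0 ≤ w.re) : cfB a b (n + 1) + w * cfB a b n ≠ 0 := by
  cases n with
  | zero => simp [cfB]
  | succ n => exact add_mul_ne_zero_of_re_mul_conj_pos hw (re_cfB_mul_conj_pos ha hb n)

theorem cfB_succ_ne_zero (ha : ∀ n, 0 < a (n + 1)) (hb : ∀ n, 0 < (b (n + 1)).re) (n : ℕ) :
    cfB a b (n + 1) ≠ 0 := by
  simpa using cfB_succ_add_mul_ne_zero ha hb n (w := 0) le_rfl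

theorem sqrt_mul_cfEnergy_one_le (ha : ∀ n, 0 < a (n + 1)) (hb : ∀ n, 0 < (b (n + 1)).re) (n : ℕ) :
    √((b (n + 1)).re * (b (n + 2)).re / ‖a (n + 2)‖) * cfEnergy a b 1 ≤
      cfEnergy a b (n + 2) - cfEnergy a b n := by
  have hprod := prod_norm_pos ha (n + 1)
  have hnorm : 0 < ‖a (n + 2)‖ := norm_pos_iff.mpr (ha (n + 1)).ne'
  have hb₁ := hb n
  have hb₂ : 0 < (b (n + 2)).re := hb (n + 1)
  set P := ∏ j ∈ range (n + 1), ‖a (j + 1)‖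
  set X := (b (n + 1)).re * ‖cfB a b (n + 1)‖ ^ 2 / P with hX
  set Y := (b (n + 2)).re * ‖cfB a b (n + 2)‖ ^ 2 / (P * ‖a (n + 2)‖) with hY
  have hX0 : 0 ≤ X := by positivity
  have hY0 : 0 ≤ Y := by positivity
  calc √((b (n + 1)).re * (b (n + 2)).re / ‖a (n + 2)‖) * cfEnergy a b 1
      ≤ √((b (n + 1)).re * (b (n + 2)).re / ‖a (n + 2)‖) *
          (‖cfB a b (n + 2)‖ * ‖cfB a b (n + 1)‖ / P) := by
        gcongr
        exact (monotone_cfEnergy ha hb (by omega)).trans (cfEnergy_le ha (n + 1))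
    _ = √(X * Y) := by
        rw [← Real.sqrt_sq (by positivity : 0 ≤ ‖cfB a b (n + 2)‖ * ‖cfB a b (n + 1)‖ / P),
          ← Real.sqrt_mul (by positivity), hX, hY]
        congr 1
        field_simp
    _ ≤ X + Y := (Real.sqrt_le_left (by positivity)).mpr (by nlinarith)
    _ = cfEnergy a b (n + 2) - cfEnergy a b n := by
        rw [cfEnergy_succ ha (n + 1), cfEnergy_succ ha n, prod_range_succ _ (n + 1)]
        ring

theorem tendsto_cfEnergy_atTop (ha : ∀ n, 0 < a (n + 1)) (hb : ∀ n, 0 < (b (n + 1)).re)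
    (hab : ¬Summable fun n => √((b (n + 1)).re * (b (n + 2)).re / ‖a (n + 2)‖)) :
    Tendsto (cfEnergy a b) atTop atTop := by
  have hmono := monotone_cfEnergy ha hb
  refine (tendsto_atTop_of_monotone hmono).resolve_right ?_
  rintro ⟨l, hl⟩
  have hstep : Summable fun n => cfEnergy a b (n + 1) - cfEnergy a b n :=
    summable_of_sum_range_le (c := l) (fun n => sub_nonneg.mpr (hmono n.le_succ)) fun n => by
      rw [sum_range_sub, cfEnergy_zero, sub_zero]
      exact hmono.ge_of_tendsto hl n
  have htwo : Summable fun n => cfEnergy a b (n + 2) - cfEnergy a b n :=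
    (((summable_nat_add_iff 1).mpr hstep).add hstep).congr fun n => by ring
  refine hab ((summable_mul_right_iff (cfEnergy_succ_pos ha hb 0).ne').mp ?_)
  exact htwo.of_nonneg_of_le
    (fun n => mul_nonneg (Real.sqrt_nonneg _) (cfEnergy_succ_pos ha hb 0).le)
    (sqrt_mul_cfEnergy_one_le ha hb)

/-- The modified approximant `S_n(w) = (A_n + w A_{n-1}) / (B_n + w B_{n-1})` in canonical
indexing: the continued fraction truncated after `a_n / b_n`, with `b_n` replaced by `b_n + w`. -/
noncomputable def cfModApprox (a b : ℕ → ℂ) (n : ℕ) (w : ℂ) : ℂ :=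
  (cfA a b (n + 1) + w * cfA a b n) / (cfB a b (n + 1) + w * cfB a b n)

theorem cfModApprox_zero_left (a b : ℕ → ℂ) (w : ℂ) : cfModApprox a b 0 w = b 0 + w := by
  simp [cfModApprox, cfA, cfB]

theorem cfModApprox_zero_right (a b : ℕ → ℂ) (n : ℕ) :
    cfModApprox a b n 0 = cfA a b (n + 1) / cfB a b (n + 1) := by
  simp [cfModApprox]

theorem cfModApprox_succ {n : ℕ} {w : ℂ} (h : b (n + 1) + w ≠ 0) :
    cfModApprox a b (n + 1) w = cfModApprox a b n (a (n + 1) / (b (n + 1) + w)) := by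
  have hfactor (p q : ℂ) : b (n + 1) * p + a (n + 1) * q + w * p =
      (b (n + 1) + w) * (p + a (n + 1) / (b (n + 1) + w) * q) := by
    field_simp
    ring
  rw [cfModApprox, cfModApprox, cfA_add_two, cfB_add_two, hfactor, hfactor, mul_div_mul_left _ _ h]

theorem norm_cfModApprox_sub_le (ha : ∀ n, 0 < a (n + 1)) (hb : ∀ n, 0 < (b (n + 1)).re) (n : ℕ)
    {w : ℂ} (hw : 0 ≤ w.re) :
    ‖cfModApprox a b (n + 1) w - cfA a b (n + 2) / cfB a b (n + 2)‖ ≤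
      (cfEnergy a b (n + 1))⁻¹ := by
  have hden := cfB_succ_add_mul_ne_zero ha hb (n + 1) hw
  have hB := cfB_succ_ne_zero ha hb (n + 1)
  have hdiff : cfModApprox a b (n + 1) w - cfA a b (n + 2) / cfB a b (n + 2) =
      w * (∏ j ∈ range (n + 1), -a (j + 1)) /
        (cfB a b (n + 2) * (cfB a b (n + 2) + w * cfB a b (n + 1))) := by
    rw [cfModApprox, ← cfA_mul_cfB_succ_sub a b, div_sub_div _ _ hden hB]
    congr 1 <;> ring
  have hdet : ‖∏ j ∈ range (n + 1), -a (j + 1)‖ = ∏ j ∈ range (n + 1), ‖a (j + 1)‖ := by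
    simp only [norm_prod, norm_neg]
  rw [hdiff, norm_div, norm_mul, hdet, norm_mul, cfEnergy, inv_div,
    div_le_div_iff₀ (by positivity) (re_cfB_mul_conj_pos ha hb n)]
  have := norm_mul_re_mul_conj_le hw (cfB a b (n + 2)) (cfB a b (n + 1))
  have := mul_le_mul_of_nonneg_left this (prod_norm_pos ha (n + 1)).le
  linarith

/-- The `n`-th value set `S_n(H)`, the image of the closed right half-plane `H` under the `n`-th
modified approximant. -/
def cfValueSet (a b : ℕ → ℂ) (n : ℕ) : Set ℂ :=
  cfModApprox a b n '' {w | 0 ≤ w.re}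

theorem antitone_cfValueSet (ha : ∀ n, 0 < a (n + 1)) (hb : ∀ n, 0 < (b (n + 1)).re) :
    Antitone (cfValueSet a b) := by
  refine antitone_nat_of_succ_le fun n => ?_
  rintro _ ⟨w, hw, rfl⟩
  have hre : 0 < (b (n + 1) + w).re := add_pos_of_pos_of_nonneg (hb n) hw
  exact ⟨_, (re_div_pos_of_pos (ha n) hre).le,
    (cfModApprox_succ (Complex.ne_zero_of_re_pos hre)).symm⟩

theorem approximant_mem_cfValueSet (a b : ℕ → ℂ) (n : ℕ) :
    cfA a b (n + 1) / cfB a b (n + 1) ∈ cfValueSet a b n :=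
  ⟨0, by simp, cfModApprox_zero_right a b n⟩

theorem dist_le_of_mem_cfValueSet (ha : ∀ n, 0 < a (n + 1)) (hb : ∀ n, 0 < (b (n + 1)).re) {n : ℕ}
    {z : ℂ} (hz : z ∈ cfValueSet a b (n + 1)) :
    dist z (cfA a b (n + 2) / cfB a b (n + 2)) ≤ (cfEnergy a b (n + 1))⁻¹ := by
  obtain ⟨w, hw, rfl⟩ := hz
  exact (dist_eq_norm _ _).trans_le (norm_cfModApprox_sub_le ha hb n hw)

theorem exists_cfConvergesTo (ha : ∀ n, 0 < a (n + 1)) (hb : ∀ n, 0 < (b (n + 1)).re)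
    (hab : ¬Summable fun n => √((b (n + 1)).re * (b (n + 2)).re / ‖a (n + 2)‖)) :
    ∃ v, CFConvergesTo a b v := by
  have hB : ∀ᶠ n in atTop, cfB a b n ≠ 0 := by
    filter_upwards [eventually_ne_atTop 0] with n hn
    obtain ⟨m, rfl⟩ := Nat.exists_eq_succ_of_ne_zero hn
    exact cfB_succ_ne_zero ha hb m
  have hcauchy : CauchySeq fun n => cfA a b (n + 2) / cfB a b (n + 2) := by
    refine cauchySeq_of_le_tendsto_0' (fun n => (cfEnergy a b (n + 1))⁻¹) (fun n m hnm => ?_)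
      ((tendsto_add_atTop_iff_nat 1).mpr (tendsto_cfEnergy_atTop ha hb hab)).inv_tendsto_atTop
    rw [dist_comm]
    exact dist_le_of_mem_cfValueSet ha hb
      (antitone_cfValueSet ha hb (by omega) (approximant_mem_cfValueSet a b (m + 1)))
  obtain ⟨v, hv⟩ := cauchySeq_tendsto_of_complete hcauchy
  exact ⟨v, hB, (tendsto_add_atTop_iff_nat 2).mp hv⟩

theorem CFConvergesTo.tendsto_of_mem_cfValueSet {v : ℂ} (hv : CFConvergesTo a b v)
    (ha : ∀ n, 0 < a (n + 1)) (hb : ∀ n, 0 < (b (n + 1)).re)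
    (hab : ¬Summable fun n => √((b (n + 1)).re * (b (n + 2)).re / ‖a (n + 2)‖))
    {z : ℕ → ℂ} (hz : ∀ᶠ n in atTop, z n ∈ cfValueSet a b n) : Tendsto z atTop (nhds v) := by
  refine (tendsto_add_atTop_iff_nat 1).mp
    (((tendsto_add_atTop_iff_nat 2).mpr hv.2).congr_dist (squeeze_zero' ?_ ?_
      ((tendsto_add_atTop_iff_nat 1).mpr (tendsto_cfEnergy_atTop ha hb hab)).inv_tendsto_atTop))
  · exact Eventually.of_forall fun n => dist_nonneg
  · filter_upwards [(tendsto_add_atTop_nat 1).eventually hz] with n hn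
    rw [dist_comm]
    exact dist_le_of_mem_cfValueSet ha hb hn

theorem CFConvergesTo.re_le (ha : ∀ n, 0 < a (n + 1)) (hb : ∀ n, 0 < (b (n + 1)).re) {v : ℂ}
    (hv : CFConvergesTo a b v) : (b 0).re ≤ v.re := by
  have hlim := (Complex.continuous_re.tendsto v).comp ((tendsto_add_atTop_iff_nat 1).mpr hv.2)
  refine ge_of_tendsto' hlim fun n => ?_
  obtain ⟨w, hw, hwn⟩ := antitone_cfValueSet ha hb n.zero_le (approximant_mem_cfValueSet a b n)
  rw [Function.comp_apply, ← hwn, cfModApprox_zero_left, Complex.add_re]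
  exact le_add_of_nonneg_right hw

theorem CFConvergesTo.norm_sub_le (ha : ∀ n, 0 < a (n + 1)) (hb : ∀ n, 0 < (b (n + 1)).re) {v : ℂ}
    (hv : CFConvergesTo a b v) : ‖v - b 0‖ ≤ ‖a 1‖ / (b 1).re := by
  have hlim := (((tendsto_add_atTop_iff_nat 2).mpr hv.2).sub_const (b 0)).norm
  refine le_of_tendsto' hlim fun n => ?_
  obtain ⟨w, hw, hwn⟩ := antitone_cfValueSet ha hb (Nat.le_add_left 1 n)
    (approximant_mem_cfValueSet a b (n + 1))
  have hre : (b 1).re ≤ (b 1 + w).re := by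
    rw [Complex.add_re]
    exact le_add_of_nonneg_right hw
  have hb1 : 0 < (b 1).re := hb 0
  have hne : b (0 + 1) + w ≠ 0 := Complex.ne_zero_of_re_pos (hb1.trans_le hre)
  rw [← hwn, cfModApprox_succ hne, cfModApprox_zero_left, add_sub_cancel_left, norm_div]
  gcongr
  exact hre.trans (Complex.re_le_norm _)

end ContinuedFraction

section Coefficients

theorem aSeq_two_mul_add_one (α β : ℝ) (m : ℕ) : aSeq α β (2 * m + 1) =
    ((2 * m + (α + β)) * (2 * m + 1 - α) * (2 * m + 1 - β) / (4 * (2 * m + 1)) : ℝ) := by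
  rw [aSeq, if_neg (by omega)]
  push_cast
  congr 1
  ring

theorem aSeq_two_mul_add_two (α β : ℝ) (m : ℕ) : aSeq α β (2 * m + 2) =
    ((2 * m + 2 - (α + β)) * (2 * m + 1 + α) * (2 * m + 1 + β) / (4 * (2 * m + 1)) : ℝ) := by
  rw [aSeq, if_pos (by omega)]
  push_cast
  congr 1 <;> ring

theorem bSeq_zero (x : ℂ) : bSeq x 0 = x / 2 := if_pos rfl

theorem bSeq_succ (x : ℂ) (n : ℕ) : bSeq x (n + 1) = x := if_neg n.succ_ne_zero

theorem cfA_bSeq_add_two (a : ℕ → ℂ) (x : ℂ) (n : ℕ) : cfA a (bSeq x) (n + 2) =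
    x * cfA a (bSeq x) (n + 1) + a (n + 1) * cfA a (bSeq x) n := by
  rw [cfA_add_two, bSeq_succ]

theorem cfB_bSeq_add_two (a : ℕ → ℂ) (x : ℂ) (n : ℕ) : cfB a (bSeq x) (n + 2) =
    x * cfB a (bSeq x) (n + 1) + a (n + 1) * cfB a (bSeq x) n := by
  rw [cfB_add_two, bSeq_succ]

variable {α β : ℝ} {x : ℂ}

theorem aSeq_succ_pos (hα : α < 1) (hβ : β < 1) (hαβ : 0 < α + β) (n : ℕ) :
    0 < aSeq α β (n + 1) := by
  obtain ⟨m, rfl | rfl⟩ := n.even_or_odd'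
  all_goals have : (0 : ℝ) ≤ m := m.cast_nonneg
  · rw [aSeq_two_mul_add_one, Complex.zero_lt_real]
    have h₁ : 0 < 2 * m + 1 - α := by linarith
    have h₂ : 0 < 2 * m + 1 - β := by linarith
    positivity
  · rw [aSeq_two_mul_add_two, Complex.zero_lt_real]
    have h₁ : 0 < 2 * m + 2 - (α + β) := by linarith
    have h₂ : 0 < 2 * m + 1 + α := by linarith
    have h₃ : 0 < 2 * m + 1 + β := by linarith
    positivity

theorem norm_aSeq_succ_le (hα : α < 1) (hβ : β < 1) (hαβ : 0 < α + β) (n : ℕ) :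
    ‖aSeq α β (n + 1)‖ ≤ (n + 2 : ℝ) ^ 2 := by
  have hpos := aSeq_succ_pos hα hβ hαβ n
  obtain ⟨m, rfl | rfl⟩ := n.even_or_odd'
  all_goals have : (0 : ℝ) ≤ m := m.cast_nonneg
  · rw [aSeq_two_mul_add_one, Complex.zero_lt_real] at hpos
    rw [aSeq_two_mul_add_one, Complex.norm_of_nonneg hpos.le, div_le_iff₀ (by positivity)]
    calc (2 * m + (α + β)) * (2 * m + 1 - α) * (2 * m + 1 - β)
        ≤ (4 * (2 * m + 1)) * (2 * m + 2) * (2 * m + 2) := by gcongr <;> linarith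
      _ = _ := by push_cast; ring
  · rw [aSeq_two_mul_add_two, Complex.zero_lt_real] at hpos
    rw [aSeq_two_mul_add_two, Complex.norm_of_nonneg hpos.le, div_le_iff₀ (by positivity)]
    calc (2 * m + 2 - (α + β)) * (2 * m + 1 + α) * (2 * m + 1 + β)
        ≤ (4 * (2 * m + 1)) * (2 * m + 2 + 1) * (2 * m + 2 + 1) := by gcongr <;> linarith
      _ = _ := by push_cast; ring

theorem re_bSeq_succ_pos (hx : 0 < x.re) (n : ℕ) : 0 < (bSeq x (n + 1)).re := by
  rwa [bSeq_succ]

theorem not_summable_sqrt_div_norm_aSeq (hα : α < 1) (hβ : β < 1) (hαβ : 0 < α + β)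
    (hx : 0 < x.re) : ¬Summable fun n =>
      √((bSeq x (n + 1)).re * (bSeq x (n + 2)).re / ‖aSeq α β (n + 2)‖) := by
  have hharm : ¬Summable fun n : ℕ => x.re * (1 / ((n + 3 : ℕ) : ℝ)) := by
    rw [summable_mul_left_iff hx.ne', summable_nat_add_iff (f := fun n : ℕ => 1 / (n : ℝ)) 3]
    exact Real.not_summable_one_div_natCast
  refine fun h => hharm (h.of_nonneg_of_le (fun n => by positivity) fun n => ?_)
  have hnorm : 0 < ‖aSeq α β (n + 2)‖ := norm_pos_iff.mpr (aSeq_succ_pos hα hβ hαβ (n + 1)).ne'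
  have hle : ‖aSeq α β (n + 2)‖ ≤ ((n + 3 : ℕ) : ℝ) ^ 2 := by
    convert norm_aSeq_succ_le hα hβ hαβ (n + 1) using 2
    push_cast
    ring
  rw [bSeq_succ, bSeq_succ, ← sq, mul_one_div]
  refine Real.le_sqrt_of_sq_le ?_
  rw [div_pow]
  gcongr

theorem exists_cfConvergesTo_aSeq_bSeq (hα : α < 1) (hβ : β < 1) (hαβ : 0 < α + β)
    (hx : 0 < x.re) : ∃ v, CFConvergesTo (aSeq α β) (bSeq x) v :=
  exists_cfConvergesTo (aSeq_succ_pos hα hβ hαβ) (re_bSeq_succ_pos hx)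
    (not_summable_sqrt_div_norm_aSeq hα hβ hαβ hx)

end Coefficients

section Contiguity

-- `hp` and `hq` say exactly that the right-hand side satisfies the recurrence of `u'`.
theorem intertwining_of_recurrence {R : Type*} [CommRing R] {a p q u u' : ℕ → R} {x x' c : R}
    (hu : ∀ n, u (n + 2) = x * u (n + 1) + a (n + 1) * u n)
    (hu' : ∀ n, u' (n + 2) = x' * u' (n + 1) + a (n + 1) * u' n)
    (hp : ∀ n, p (n + 2) = x' * q (n + 1) + p n - x * q n)
    (hq : ∀ n, p (n + 2) * x + a (n + 3) * q (n + 2) = x' * p (n + 1) + a (n + 2) * q n)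
    (h₀ : c * u' 1 = p 0 * u 1 + a 1 * q 0 * u 0)
    (h₁ : c * u' 2 = p 1 * u 2 + a 2 * q 1 * u 1) (n : ℕ) :
    c * u' (n + 1) = p n * u (n + 1) + a (n + 1) * q n * u n := by
  induction n using Nat.twoStepInduction with
  | zero => exact h₀
  | one => exact h₁
  | more n ih₀ ih₁ =>
    linear_combination c * hu' (n + 1) + x' * ih₁ + a (n + 2) * ih₀ - p (n + 2) * hu (n + 1)
      - u (n + 2) * hq n - a (n + 2) * u (n + 1) * hp n - a (n + 2) * q n * hu n

/-- The quotient of Gamma values that the continued fraction inverts. -/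
noncomputable def gammaQuotient (α β : ℝ) (x : ℂ) : ℂ :=
  Complex.Gamma ((x - α + 1) / 2) * Complex.Gamma ((x + α + β) / 2) *
      Complex.Gamma ((x - β + 1) / 2) /
    (Complex.Gamma ((x + α + 1) / 2) * Complex.Gamma ((x - α - β + 2) / 2) *
      Complex.Gamma ((x + β + 1) / 2))

/-- The factor by which the numerator of `gammaQuotient α β` is multiplied under `x ↦ x + 2`. -/
noncomputable def gammaNumFactor (α β : ℝ) (x : ℂ) : ℂ :=
  (x - α + 1) / 2 * ((x + α + β) / 2) * ((x - β + 1) / 2)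

/-- The factor by which the denominator of `gammaQuotient α β` is multiplied under `x ↦ x + 2`. -/
noncomputable def gammaDenFactor (α β : ℝ) (x : ℂ) : ℂ :=
  (x + α + 1) / 2 * ((x - α - β + 2) / 2) * ((x + β + 1) / 2)

/-- The coefficient of the `n`-th numerator or denominator at `x` in the contiguous relation
expressing the one at `x + 2`. Together with `contigCoeffPrev` it is found by solving the hypotheses
`hp` and `hq` of `intertwining_of_recurrence`. -/
noncomputable def contigCoeff (α β : ℝ) (x : ℂ) (n : ℕ) : ℂ :=
  (x + 1) * n * (n + 2 + x) / 4 +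
    if n % 2 = 0 then gammaDenFactor α β x else gammaNumFactor α β x + (x + 1) ^ 2 / 4

/-- The coefficient of `aSeq α β (n + 1)` times the preceding numerator or denominator in that
relation. -/
noncomputable def contigCoeffPrev (x : ℂ) (n : ℕ) : ℂ :=
  (x + 1) * (n + 1) / 2

variable {α β : ℝ} {x : ℂ}

theorem contigCoeff_two_mul (α β : ℝ) (x : ℂ) (m : ℕ) : contigCoeff α β x (2 * m) =
    (x + 1) * m * (2 * m + 2 + x) / 2 + gammaDenFactor α β x := by
  rw [contigCoeff, if_pos (by omega)]
  push_cast
  ring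

theorem contigCoeff_two_mul_add_one (α β : ℝ) (x : ℂ) (m : ℕ) : contigCoeff α β x (2 * m + 1) =
    (x + 1) * (m + 1) * (2 * m + 2 + x) / 2 + gammaNumFactor α β x := by
  rw [contigCoeff, if_neg (by omega)]
  push_cast
  ring

theorem contigCoeff_add_two (α β : ℝ) (x : ℂ) (n : ℕ) : contigCoeff α β x (n + 2) =
    (x + 2) * contigCoeffPrev x (n + 1) + contigCoeff α β x n - x * contigCoeffPrev x n := by
  simp only [contigCoeff, contigCoeffPrev, Nat.add_mod_right]
  push_cast
  ring

theorem contigCoeff_add_two_mul (α β : ℝ) (x : ℂ) (n : ℕ) :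
    contigCoeff α β x (n + 2) * x + aSeq α β (n + 3) * contigCoeffPrev x (n + 2) =
      (x + 2) * contigCoeff α β x (n + 1) + aSeq α β (n + 2) * contigCoeffPrev x n := by
  have hodd (k : ℕ) : (2 * (k : ℂ) + 1) ≠ 0 := by exact_mod_cast (2 * k).succ_ne_zero
  obtain ⟨m, rfl | rfl⟩ := n.even_or_odd'
  · have h₁ := hodd (m + 1)
    rw [show 2 * m + 3 = 2 * (m + 1) + 1 by ring, aSeq_two_mul_add_one, aSeq_two_mul_add_two,
      show 2 * m + 2 = 2 * (m + 1) by ring, contigCoeff_two_mul, contigCoeff_two_mul_add_one]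
    simp only [contigCoeffPrev, gammaNumFactor, gammaDenFactor]
    push_cast at h₁ ⊢
    field_simp
    ring
  · have h₁ := hodd (m + 1)
    rw [show 2 * m + 1 + 3 = 2 * (m + 1) + 2 by ring, show 2 * m + 1 + 2 = 2 * (m + 1) + 1 by ring,
      show 2 * m + 1 + 1 = 2 * (m + 1) by ring, aSeq_two_mul_add_one, aSeq_two_mul_add_two,
      contigCoeff_two_mul, contigCoeff_two_mul_add_one]
    simp only [contigCoeffPrev, gammaNumFactor, gammaDenFactor]
    push_cast at h₁ ⊢
    field_simp
    ring

theorem gammaNumFactor_mul_cfA_add_two (α β : ℝ) (x : ℂ) (n : ℕ) :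
    gammaNumFactor α β x * cfA (aSeq α β) (bSeq (x + 2)) (n + 1) =
      contigCoeff α β x n * cfA (aSeq α β) (bSeq x) (n + 1) +
        aSeq α β (n + 1) * contigCoeffPrev x n * cfA (aSeq α β) (bSeq x) n := by
  refine intertwining_of_recurrence (cfA_bSeq_add_two _ x) (cfA_bSeq_add_two _ (x + 2))
    (contigCoeff_add_two α β x) (contigCoeff_add_two_mul α β x) ?_ ?_ n
  · simp only [gammaNumFactor, cfA, bSeq, ↓reduceIte, contigCoeff, CharP.cast_eq_zero, mul_zero,
      zero_add, zero_mul, zero_div, Nat.zero_mod, gammaDenFactor, aSeq, Nat.mod_succ, one_ne_zero,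
      Nat.cast_one, sub_self, mul_one, contigCoeffPrev]
    ring
  · simp only [gammaNumFactor, cfA, bSeq, zero_add, one_ne_zero, ↓reduceIte, aSeq, Nat.mod_succ,
      Nat.cast_one, sub_self, mul_one, contigCoeff, Nat.mod_self, Nat.cast_ofNat, contigCoeffPrev]
    ring

theorem gammaDenFactor_mul_cfB_add_two (α β : ℝ) (x : ℂ) (n : ℕ) :
    gammaDenFactor α β x * cfB (aSeq α β) (bSeq (x + 2)) (n + 1) =
      contigCoeff α β x n * cfB (aSeq α β) (bSeq x) (n + 1) +
        aSeq α β (n + 1) * contigCoeffPrev x n * cfB (aSeq α β) (bSeq x) n := by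
  refine intertwining_of_recurrence (cfB_bSeq_add_two _ x) (cfB_bSeq_add_two _ (x + 2))
    (contigCoeff_add_two α β x) (contigCoeff_add_two_mul α β x) ?_ ?_ n
  · simp only [gammaDenFactor, cfB, mul_one, contigCoeff, CharP.cast_eq_zero, mul_zero, zero_add,
      zero_mul, zero_div, Nat.zero_mod, ↓reduceIte, add_zero]
  · simp only [gammaDenFactor, cfB, bSeq, zero_add, one_ne_zero, ↓reduceIte, mul_one, aSeq,
      Nat.mod_succ, Nat.cast_one, sub_self, mul_zero, add_zero, contigCoeff, gammaNumFactor,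
      Nat.mod_self, Nat.cast_ofNat, contigCoeffPrev]
    ring

end Contiguity

section FunctionalEquation

variable {α β : ℝ} {x : ℂ}

theorem eventually_re_contigCoeff_div_pos (α β : ℝ) (hx : 0 < x.re) :
    ∀ᶠ n in atTop, 0 < (contigCoeff α β x n / (x + 1)).re := by
  have hx1 : x + 1 ≠ 0 := Complex.ne_zero_of_re_pos (by simp; linarith)
  have hquad (c : ℂ) : ∀ᶠ n : ℕ in atTop,
      0 < (((x + 1) * n * (n + 2 + x) / 4 + c) / (x + 1)).re := by
    have hlin : Tendsto (fun n : ℕ => (n : ℝ) / 2 + (c / (x + 1)).re) atTop atTop :=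
      tendsto_atTop_add_const_right _ _
        (tendsto_natCast_atTop_atTop.atTop_div_const two_pos)
    filter_upwards [hlin.eventually_gt_atTop 0] with n hn
    have hsplit : ((x + 1) * n * (n + 2 + x) / 4 + c) / (x + 1) =
        ((n / 4 : ℝ) : ℂ) * (n + 2 + x) + c / (x + 1) := by
      push_cast
      field_simp
    rw [hsplit, Complex.add_re, Complex.re_ofReal_mul, Complex.add_re, Complex.add_re,
      Complex.natCast_re, Complex.re_ofNat]
    nlinarith [mul_nonneg n.cast_nonneg hx.le, mul_self_nonneg (n : ℝ)]
  filter_upwards [hquad (gammaDenFactor α β x), hquad (gammaNumFactor α β x + (x + 1) ^ 2 / 4)]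
    with n heven hodd
  rw [contigCoeff]
  split_ifs <;> assumption

theorem gammaNumFactor_div_mul_approximant (α β : ℝ) (x : ℂ) {n : ℕ}
    (hn : contigCoeff α β x n ≠ 0) :
    gammaNumFactor α β x / gammaDenFactor α β x *
        (cfA (aSeq α β) (bSeq (x + 2)) (n + 1) / cfB (aSeq α β) (bSeq (x + 2)) (n + 1)) =
      cfModApprox (aSeq α β) (bSeq x) n
        (aSeq α β (n + 1) * contigCoeffPrev x n / contigCoeff α β x n) := by
  rw [div_mul_div_comm, gammaNumFactor_mul_cfA_add_two, gammaDenFactor_mul_cfB_add_two,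
    cfModApprox]
  symm
  rw [← mul_div_mul_left _ _ hn]
  congr 1 <;> field_simp

theorem CFConvergesTo.eq_gammaNumFactor_div_mul (hα : α < 1) (hβ : β < 1) (hαβ : 0 < α + β)
    (hx : 0 < x.re) {v v' : ℂ} (hv : CFConvergesTo (aSeq α β) (bSeq x) v)
    (hv' : CFConvergesTo (aSeq α β) (bSeq (x + 2)) v') :
    v = gammaNumFactor α β x / gammaDenFactor α β x * v' := by
  have ha := aSeq_succ_pos hα hβ hαβ
  have hp := eventually_re_contigCoeff_div_pos α β hx
  have hmem : ∀ᶠ n in atTop, cfModApprox (aSeq α β) (bSeq x) n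
      (aSeq α β (n + 1) * contigCoeffPrev x n / contigCoeff α β x n) ∈
        cfValueSet (aSeq α β) (bSeq x) n := by
    filter_upwards [hp] with n hn
    have hw : aSeq α β (n + 1) * contigCoeffPrev x n / contigCoeff α β x n =
        aSeq α β (n + 1) * ((n + 1) / 2) / (contigCoeff α β x n / (x + 1)) := by
      rw [contigCoeffPrev, div_div_eq_mul_div]
      ring
    have hpos : 0 < aSeq α β (n + 1) * ((n + 1) / 2) := mul_pos (ha n) (by positivity)
    refine ⟨_, ?_, rfl⟩
    rw [hw]
    exact (re_div_pos_of_pos hpos hn).le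
  have hlim := hv.tendsto_of_mem_cfValueSet ha (re_bSeq_succ_pos hx)
    (not_summable_sqrt_div_norm_aSeq hα hβ hαβ hx) hmem
  have hlim' := ((tendsto_add_atTop_iff_nat 1).mpr hv'.2).const_mul
    (gammaNumFactor α β x / gammaDenFactor α β x)
  refine tendsto_nhds_unique hlim (hlim'.congr' ?_)
  filter_upwards [hp] with n hn
  exact gammaNumFactor_div_mul_approximant α β x
    (left_ne_zero_of_mul (Complex.ne_zero_of_re_pos hn))

end FunctionalEquation

section Gamma

theorem ascPochhammer_eval_eq_prod_range {R : Type*} [CommSemiring R] (n : ℕ) (z : R) :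
    (ascPochhammer R n).eval z = ∏ j ∈ range n, (z + j) := by
  induction n with
  | zero => simp
  | succ n ih => rw [ascPochhammer_succ_eval, ih, prod_range_succ]

theorem Gamma_add_succ_eq_div_GammaSeq {z : ℂ} (hz : ∀ m : ℕ, z ≠ -m) {n : ℕ} (hn : n ≠ 0) :
    Complex.Gamma (z + (n + 1 : ℕ)) =
      Complex.Gamma z * ((n : ℂ) ^ z * n.factorial) / Complex.GammaSeq z n := by
  have hcpow : (n : ℂ) ^ z ≠ 0 := by simp [Complex.cpow_eq_zero_iff, hn]
  have hfact : (n.factorial : ℂ) ≠ 0 := mod_cast n.factorial_ne_zero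
  have hprod := Complex.Gamma_add_nat_div_Gamma_eq (n := n + 1) z hz
  rw [div_eq_iff (Complex.Gamma_ne_zero hz), ascPochhammer_eval_eq_prod_range] at hprod
  rw [hprod, Complex.GammaSeq, div_div_eq_mul_div]
  field_simp

theorem tendsto_Gamma_div_Gamma_mul_cpow {z w : ℂ} (hz : ∀ m : ℕ, z ≠ -m)
    (hw : ∀ m : ℕ, w ≠ -m) :
    Tendsto (fun n : ℕ => Complex.Gamma (z + (n + 1 : ℕ)) / Complex.Gamma (w + (n + 1 : ℕ)) *
      (n : ℂ) ^ (w - z)) atTop (nhds 1) := by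
  have hseq {s : ℂ} (hs : ∀ m : ℕ, s ≠ -m) :
      Tendsto (fun n => Complex.Gamma s / Complex.GammaSeq s n) atTop (nhds 1) := by
    have hΓ := Complex.Gamma_ne_zero hs
    rw [← div_self hΓ]
    exact tendsto_const_nhds.div (Complex.GammaSeq_tendsto_Gamma s) hΓ
  have hlim := (hseq hz).div (hseq hw) one_ne_zero
  rw [div_one] at hlim
  refine hlim.congr' ?_
  filter_upwards [eventually_ne_atTop 0] with n hn
  have hn0 : (n : ℂ) ≠ 0 := Nat.cast_ne_zero.mpr hn
  have hfact : (n.factorial : ℂ) ≠ 0 := mod_cast n.factorial_ne_zero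
  have hz0 : (n : ℂ) ^ z ≠ 0 := by simp [Complex.cpow_eq_zero_iff, hn]
  have hw0 : (n : ℂ) ^ w ≠ 0 := by simp [Complex.cpow_eq_zero_iff, hn]
  rw [Gamma_add_succ_eq_div_GammaSeq hz hn, Gamma_add_succ_eq_div_GammaSeq hw hn,
    Complex.cpow_sub _ _ hn0, Pi.div_apply]
  field_simp

variable {s t : ℂ}

theorem Gamma_add_two_div_two (hs : 0 < s.re) :
    Complex.Gamma ((s + 2) / 2) = s / 2 * Complex.Gamma (s / 2) := by
  rw [add_div, div_self two_ne_zero, Complex.Gamma_add_one]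
  exact div_ne_zero (Complex.ne_zero_of_re_pos hs) two_ne_zero

theorem div_two_ne_neg_natCast (hs : 0 < s.re) (m : ℕ) : s / 2 ≠ -m := fun h => by
  have hre : s.re / 2 = -m := by simpa using congrArg Complex.re h
  linarith [m.cast_nonneg (α := ℝ)]

theorem tendsto_Gamma_half_div_Gamma_half_mul_cpow (hs : 0 < s.re) (ht : 0 < t.re) :
    Tendsto (fun n : ℕ => Complex.Gamma ((s + 2 * (n + 1 : ℕ)) / 2) /
      Complex.Gamma ((t + 2 * (n + 1 : ℕ)) / 2) * (n : ℂ) ^ ((t - s) / 2)) atTop (nhds 1) := by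
  have hlim := tendsto_Gamma_div_Gamma_mul_cpow (div_two_ne_neg_natCast hs)
    (div_two_ne_neg_natCast ht)
  simpa only [add_div, sub_div, mul_div_cancel_left₀ _ (two_ne_zero' ℂ)] using hlim

variable {α β : ℝ} {x : ℂ}

theorem gammaQuotient_add_two (hα : α < 1) (hβ : β < 1) (hαβ : 0 < α + β) (hx : 0 < x.re) :
    gammaQuotient α β (x + 2) =
      gammaNumFactor α β x / gammaDenFactor α β x * gammaQuotient α β x := by
  rw [gammaQuotient, show x + 2 - α + 1 = x - α + 1 + 2 by ring,
    show x + 2 + α + β = x + α + β + 2 by ring, show x + 2 - β + 1 = x - β + 1 + 2 by ring,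
    show x + 2 + α + 1 = x + α + 1 + 2 by ring,
    show x + 2 - α - β + 2 = x - α - β + 2 + 2 by ring,
    show x + 2 + β + 1 = x + β + 1 + 2 by ring,
    Gamma_add_two_div_two (s := x - α + 1) (by simp; linarith),
    Gamma_add_two_div_two (s := x + α + β) (by simp; linarith),
    Gamma_add_two_div_two (s := x - β + 1) (by simp; linarith),
    Gamma_add_two_div_two (s := x + α + 1) (by simp; linarith),
    Gamma_add_two_div_two (s := x - α - β + 2) (by simp; linarith),
    Gamma_add_two_div_two (s := x + β + 1) (by simp; linarith),
    gammaQuotient, gammaNumFactor, gammaDenFactor, div_mul_div_comm]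
  congr 1 <;> ring

theorem tendsto_gammaQuotient_mul_natCast (hα : α < 1) (hβ : β < 1) (hαβ : 0 < α + β)
    (hx : 0 < x.re) :
    Tendsto (fun n : ℕ => gammaQuotient α β (x + 2 * (n + 1 : ℕ)) * n) atTop (nhds 1) := by
  have h₁ := tendsto_Gamma_half_div_Gamma_half_mul_cpow (s := x - α + 1) (t := x + α + 1)
    (by simp; linarith) (by simp; linarith)
  have h₂ := tendsto_Gamma_half_div_Gamma_half_mul_cpow (s := x + α + β) (t := x - α - β + 2)
    (by simp; linarith) (by simp; linarith)
  have h₃ := tendsto_Gamma_half_div_Gamma_half_mul_cpow (s := x - β + 1) (t := x + β + 1)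
    (by simp; linarith) (by simp; linarith)
  have hlim := (h₁.mul h₂).mul h₃
  rw [mul_one, mul_one] at hlim
  refine hlim.congr' ?_
  filter_upwards [eventually_ne_atTop 0] with n hn
  have hn0 : (n : ℂ) ≠ 0 := Nat.cast_ne_zero.mpr hn
  have hpow : (n : ℂ) ^ ((x + α + 1 - (x - α + 1)) / 2) *
      (n : ℂ) ^ ((x - α - β + 2 - (x + α + β)) / 2) *
        (n : ℂ) ^ ((x + β + 1 - (x - β + 1)) / 2) = n := by
    rw [← Complex.cpow_add _ _ hn0, ← Complex.cpow_add _ _ hn0]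
    ring_nf
    exact Complex.cpow_one _
  set y : ℂ := 2 * (n + 1 : ℕ)
  rw [mul_mul_mul_comm (_ / _), mul_mul_mul_comm (_ / _ * _), hpow, div_mul_div_comm,
    div_mul_div_comm, gammaQuotient,
    show x - α + 1 + y = x + y - α + 1 by ring, show x + α + β + y = x + y + α + β by ring,
    show x - β + 1 + y = x + y - β + 1 by ring, show x + α + 1 + y = x + y + α + 1 by ring,
    show x - α - β + 2 + y = x + y - α - β + 2 by ring,
    show x + β + 1 + y = x + y + β + 1 by ring]

end Gamma

section Evaluation

variable {α β : ℝ} {x : ℂ}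

theorem re_add_two_mul_natCast_pos (hx : 0 < x.re) (n : ℕ) : 0 < (x + 2 * n).re := by
  simp only [Complex.add_re, Complex.mul_re, Complex.re_ofNat, Complex.natCast_re,
    Complex.im_ofNat, zero_mul, sub_zero]
  positivity

theorem gammaQuotient_add_two_mul_natCast_mul (hα : α < 1) (hβ : β < 1) (hαβ : 0 < α + β)
    (hx : 0 < x.re) {V : ℂ → ℂ}
    (hV : ∀ y : ℂ, 0 < y.re → CFConvergesTo (aSeq α β) (bSeq y) (V y)) (n : ℕ) :
    gammaQuotient α β (x + 2 * n) * V (x + 2 * n) = gammaQuotient α β x * V x := by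
  induction n with
  | zero => simp
  | succ n ih =>
    have hn := re_add_two_mul_natCast_pos hx n
    have hn' : 0 < (x + 2 * n + 2).re := by
      rw [Complex.add_re, Complex.re_ofNat]
      positivity
    rw [← ih, (hV _ hn).eq_gammaNumFactor_div_mul hα hβ hαβ hn (hV _ hn'), Nat.cast_succ, mul_add,
      mul_one, ← add_assoc, gammaQuotient_add_two hα hβ hαβ hn]
    ring

theorem tendsto_div_natCast_of_norm_sub_le {u : ℕ → ℂ} {C : ℝ} (hu : ∀ n : ℕ, ‖u n - n‖ ≤ C) :
    Tendsto (fun n : ℕ => u n / n) atTop (nhds 1) := by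
  have hbdd : IsBoundedUnder (· ≤ ·) atTop (norm ∘ fun n : ℕ => u n - n) :=
    isBoundedUnder_of ⟨C, hu⟩
  have hlim := ((tendsto_inv_atTop_nhds_zero_nat (𝕜 := ℂ)).zero_mul_isBoundedUnder_le
    hbdd).add_const 1
  rw [zero_add] at hlim
  refine hlim.congr' ?_
  filter_upwards [eventually_ne_atTop 0] with n hn
  have hn0 : (n : ℂ) ≠ 0 := Nat.cast_ne_zero.mpr hn
  field_simp
  ring

theorem tendsto_div_natCast_of_cfConvergesTo (hα : α < 1) (hβ : β < 1) (hαβ : 0 < α + β)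
    (hx : 0 < x.re) {v : ℕ → ℂ}
    (hv : ∀ n : ℕ, CFConvergesTo (aSeq α β) (bSeq (x + 2 * n)) (v n)) :
    Tendsto (fun n : ℕ => v (n + 1) / n) atTop (nhds 1) := by
  refine tendsto_div_natCast_of_norm_sub_le (C := ‖aSeq α β 1‖ / x.re + ‖x / 2 + 1‖) fun n => ?_
  have hre := re_add_two_mul_natCast_pos hx (n + 1)
  have hv₀ : ‖v (n + 1) - (x + 2 * (n + 1 : ℕ)) / 2‖ ≤
      ‖aSeq α β 1‖ / (x + 2 * (n + 1 : ℕ)).re :=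
    (hv (n + 1)).norm_sub_le (aSeq_succ_pos hα hβ hαβ) (re_bSeq_succ_pos hre)
  calc ‖v (n + 1) - n‖
      = ‖(v (n + 1) - (x + 2 * (n + 1 : ℕ)) / 2) + (x / 2 + 1)‖ := by
        congr 1
        push_cast
        ring
    _ ≤ ‖aSeq α β 1‖ / (x + 2 * (n + 1 : ℕ)).re + ‖x / 2 + 1‖ :=
        (norm_add_le _ _).trans (by gcongr)
    _ ≤ ‖aSeq α β 1‖ / x.re + ‖x / 2 + 1‖ := by
        gcongr
        exact le_add_of_nonneg_right (by positivity)

theorem stmt4_general (hα : α < 1) (hβ : β < 1) (hαβ : 0 < α + β) (hx : 0 < x.re) :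
    ∃ v : ℂ, v ≠ 0 ∧ CFConvergesTo (aSeq α β) (bSeq x) v ∧
      Complex.Gamma ((x - α + 1) / 2) * Complex.Gamma ((x + α + β) / 2) *
          Complex.Gamma ((x - β + 1) / 2) /
        (Complex.Gamma ((x + α + 1) / 2) * Complex.Gamma ((x - α - β + 2) / 2) *
          Complex.Gamma ((x + β + 1) / 2)) = 1 / v := by
  choose! V hV using fun (y : ℂ) (hy : 0 < y.re) => exists_cfConvergesTo_aSeq_bSeq hα hβ hαβ hy
  have hre : (bSeq x 0).re ≤ (V x).re :=
    (hV x hx).re_le (aSeq_succ_pos hα hβ hαβ) (re_bSeq_succ_pos hx)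
  have hV0 : V x ≠ 0 := Complex.ne_zero_of_re_pos <| hre.trans_lt' <| by
    rw [bSeq_zero, Complex.div_ofNat_re]
    exact half_pos hx
  have hVlim := tendsto_div_natCast_of_cfConvergesTo hα hβ hαβ hx
    fun n => hV _ (re_add_two_mul_natCast_pos hx n)
  have hGlim := tendsto_gammaQuotient_mul_natCast hα hβ hαβ hx
  have hprod : gammaQuotient α β x * V x = 1 := by
    have hlim := hGlim.mul hVlim
    rw [one_mul] at hlim
    refine tendsto_nhds_unique (tendsto_const_nhds.congr' ?_) hlim
    filter_upwards [eventually_ne_atTop 0] with n hn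
    rw [mul_assoc, mul_div_cancel₀ _ (Nat.cast_ne_zero.mpr hn),
      gammaQuotient_add_two_mul_natCast_mul hα hβ hαβ hx hV]
  exact ⟨V x, hV0, hV x hx, (eq_div_iff hV0).mpr hprod⟩

end Evaluation

theorem stmt4 (α β : ℝ) (hα0 : 0 < α) (hα1 : α < 1) (hβ0 : 0 < β) (hβ1 : β < 1)
    (x : ℂ) (hx : 0 < x.re) :
    ∃ v : ℂ, v ≠ 0 ∧ CFConvergesTo (aSeq α β) (bSeq x) v ∧
      Complex.Gamma ((x - α + 1) / 2) * Complex.Gamma ((x + α + β) / 2) *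
          Complex.Gamma ((x - β + 1) / 2) /
        (Complex.Gamma ((x + α + 1) / 2) * Complex.Gamma ((x - α - β + 2) / 2) *
          Complex.Gamma ((x + β + 1) / 2)) = 1 / v :=
  stmt4_general hα1 hβ1 (add_pos hα0 hβ0) hx
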